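/- Let (E, ‖·‖) be a real Banach space with a Schauder basis (e_n)_{n≥1} and associated biorthogonal system (e_n)_{n≥1}, (e*_n)_{n≥1}, and fix x* ∈ E. For each k ≥ 1 let f_k : E → ℝ be a convex continuous function such that: (i) for all n ≥ 1 there exists a_n > 0 such that for all k ≥ 1 the directional derivative f_k'(x; e_n) exists for every x in I_{x*,a_n} := {x* + t e_n : |t| < a_n}; (ii) the series Σ_{k=1}^{∞} f_k(x) converges pointwise to a function f : E → ℝ; (iii) for each n ≥ 1 the series Σ_{k=1}^{∞} f_k'(x; e_n) converges uniformly for x ∈ I_{x*,a_n}. Then each f_k is Gâteaux-differentiable at x*, the convex continuous function f is Gâteaux-differentiable at x*, and f'(x*; e_n) = Σ_{k=1}^{∞} f_k'(x*; e_n) for all n ≥ 1. -/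

import Mathlib

open Filter Topology

/-- `f` has directional derivative `L` at `x` in the direction `h`. -/
def HasDirDeriv {E : Type*} [AddCommGroup E] [Module ℝ E] (f : E → ℝ) (x h : E) (L : ℝ) : Prop :=
  Tendsto (fun t : ℝ => (f (x + t • h) - f x) / t) (𝓝[≠] (0 : ℝ)) (𝓝 L)

/-- `f` is Gâteaux-differentiable at `x`. -/
def GateauxDiffAt {E : Type*} [AddCommGroup E] [Module ℝ E] [TopologicalSpace E]
    (f : E → ℝ) (x : E) : Prop :=
  ∃ F : E →L[ℝ] ℝ, ∀ h : E, HasDirDeriv f x h (F h)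

/-!
A continuous convex function `g` has a continuous subgradient `F` at `x` by Hahn–Banach. The
remainder `r h = g (x + h) - g x - F h` is convex, nonnegative and vanishes at `0`, and for such an
`r` the directions `h` with `r (t h) = o(t)` form a closed linear subspace: additivity and
closedness both come from `r (u + v) ≤ (r (2u) + r (2v)) / 2`. Since a two-sided derivative of `g`
in a direction `h` must equal `F h`, directional derivatives along a family with dense span already
force Gâteaux differentiability.

The sum `f` is convex as a pointwise limit, and continuous because the Baire category theorem bounds
the partial sums from above, uniformly, on some open set. Termwise differentiation along each line
`x* + ℝ e_n` gives the derivative of `f` in the direction `e_n`.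
-/

section DirectionalDerivative

variable {E : Type*} [AddCommGroup E] [Module ℝ E] {f : E → ℝ} {x h : E} {L : ℝ}

theorem hasDirDeriv_iff_hasLineDerivAt : HasDirDeriv f x h L ↔ HasLineDerivAt ℝ f L x h := by
  simp only [HasDirDeriv, hasLineDerivAt_iff_tendsto_slope_zero, div_eq_inv_mul, smul_eq_mul]

theorem HasDirDeriv.hasDerivAt_of_add_smul {t : ℝ} (hL : HasDirDeriv f (x + t • h) h L) :
    HasDerivAt (fun s : ℝ => f (x + s • h)) L t := by
  have hzero := hasDirDeriv_iff_hasLineDerivAt.1 hL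
  rw [HasLineDerivAt, ← sub_self t] at hzero
  refine (hzero.comp_sub_const t t).congr_of_eventuallyEq (.of_forall fun s => ?_)
  simp only [add_assoc, ← add_smul, add_sub_cancel]

theorem HasDirDeriv.smul (hL : HasDirDeriv f x h L) (c : ℝ) :
    HasDirDeriv f x (c • h) (c * L) := by
  rw [hasDirDeriv_iff_hasLineDerivAt] at hL ⊢
  exact hL.smul c

theorem hasDirDeriv_sum {ι : Type*} {s : Finset ι} {F : ι → E → ℝ} {F' : ι → ℝ}
    (hF : ∀ i ∈ s, HasDirDeriv (F i) x h (F' i)) :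
    HasDirDeriv (fun y => ∑ i ∈ s, F i y) x h (∑ i ∈ s, F' i) := by
  simp only [HasDirDeriv, ← Finset.sum_sub_distrib, Finset.sum_div]
  exact tendsto_finsetSum s hF

/-- The open interval of radius `a` centred at `x` on the line through `x` directed by `h`,
written `I_{x,a}` when `h` is understood. -/
def lineInterval (x h : E) (a : ℝ) : Set E :=
  {y | ∃ t : ℝ, |t| < a ∧ y = x + t • h}

theorem self_mem_lineInterval {a : ℝ} (ha : 0 < a) : x ∈ lineInterval x h a :=
  ⟨0, by rwa [abs_zero], by rw [zero_smul, add_zero]⟩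

theorem hasDirDeriv_of_tendstoUniformlyOn {ι : Type*} {l : Filter ι} [l.NeBot] {a : ℝ} (ha : 0 < a)
    {F F' : ι → E → ℝ} {f' : E → ℝ}
    (hF : ∀ i, ∀ y ∈ lineInterval x h a, HasDirDeriv (F i) y h (F' i y))
    (hF' : TendstoUniformlyOn F' f' l (lineInterval x h a))
    (hf : ∀ y ∈ lineInterval x h a, Tendsto (F · y) l (𝓝 (f y))) :
    HasDirDeriv f x h (f' x) := by
  have hmaps : ∀ t ∈ Set.Ioo (-a) a, x + t • h ∈ lineInterval x h a :=
    fun t ht => ⟨t, abs_lt.2 ht, rfl⟩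
  have hderiv : HasDerivAt (fun t : ℝ => f (x + t • h)) (f' (x + (0 : ℝ) • h)) 0 :=
    hasDerivAt_of_tendstoUniformlyOn (g' := fun t => f' (x + t • h)) isOpen_Ioo
      ((hF'.comp fun t : ℝ => x + t • h).mono hmaps)
      (.of_forall fun i t ht => (hF i _ (hmaps t ht)).hasDerivAt_of_add_smul)
      (fun t ht => hf _ (hmaps t ht)) ⟨neg_lt_zero.2 ha, ha⟩
  rwa [zero_smul, add_zero, ← HasLineDerivAt, ← hasDirDeriv_iff_hasLineDerivAt] at hderiv

theorem hasDirDeriv_zero_iff_isLittleO (h0 : f 0 = 0) :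
    HasDirDeriv f 0 h 0 ↔ (fun t : ℝ => f (t • h)) =o[𝓝 0] fun t : ℝ => t := by
  rw [hasDirDeriv_iff_hasLineDerivAt, hasLineDerivAt_iff_isLittleO_nhds_zero]
  simp only [zero_add, h0, sub_zero, smul_zero]

theorem HasDirDeriv.eq_zero_of_nonneg (h0 : f 0 = 0) (hnonneg : ∀ u, 0 ≤ f u)
    (hL : HasDirDeriv f 0 h L) : L = 0 := by
  have hmin : IsLocalMin (fun t : ℝ => f (0 + t • h)) 0 :=
    .of_forall fun t => by simpa only [zero_smul, add_zero, h0] using hnonneg (0 + t • h)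
  exact hmin.hasDerivAt_eq_zero (hasDirDeriv_iff_hasLineDerivAt.1 hL)

end DirectionalDerivative

section FlatDirections

variable {E : Type*} [AddCommGroup E] [Module ℝ E] {r : E → ℝ}

theorem convexOn_map_add_le (hr : ConvexOn ℝ Set.univ r) (u v : E) :
    r (u + v) ≤ (r ((2 : ℝ) • u) + r ((2 : ℝ) • v)) / 2 := by
  have hmid := hr.2 (Set.mem_univ ((2 : ℝ) • u)) (Set.mem_univ ((2 : ℝ) • v))
    one_half_pos.le one_half_pos.le (add_halves 1)
  simp only [smul_smul, one_div, inv_mul_cancel₀ (two_ne_zero' ℝ), one_smul, smul_eq_mul] at hmid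
  linarith

theorem convexOn_map_smul_le_abs_mul_max (hr : ConvexOn ℝ Set.univ r) (h0 : r 0 = 0) {t : ℝ}
    (ht : |t| ≤ 1) (w : E) : r (t • w) ≤ |t| * max (r w) (r (-w)) := by
  have hsmul : ∀ v, r (|t| • v) ≤ |t| * r v := fun v => by
    simpa [h0] using hr.2 (Set.mem_univ v) (Set.mem_univ 0) (abs_nonneg t) (sub_nonneg.2 ht)
      (add_sub_cancel |t| 1)
  rcases abs_choice t with habs | habs
  · calc r (t • w) = r (|t| • w) := by rw [habs]
      _ ≤ |t| * r w := hsmul w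
      _ ≤ |t| * max (r w) (r (-w)) := by gcongr; exact le_max_left _ _
  · calc r (t • w) = r (|t| • -w) := by rw [habs, neg_smul_neg]
      _ ≤ |t| * r (-w) := hsmul (-w)
      _ ≤ |t| * max (r w) (r (-w)) := by gcongr; exact le_max_right _ _

theorem HasDirDeriv.add_of_convexOn (hr : ConvexOn ℝ Set.univ r) (h0 : r 0 = 0)
    (hnonneg : ∀ h, 0 ≤ r h) {u v : E} (hu : HasDirDeriv r 0 u 0) (hv : HasDirDeriv r 0 v 0) :
    HasDirDeriv r 0 (u + v) 0 := by
  have htwice : ∀ {w : E}, HasDirDeriv r 0 w 0 →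
      (fun t : ℝ => r (t • (2 : ℝ) • w)) =o[𝓝 0] fun t : ℝ => t := fun hw =>
    (hasDirDeriv_zero_iff_isLittleO h0).1 (by simpa only [mul_zero] using hw.smul 2)
  refine (hasDirDeriv_zero_iff_isLittleO h0).2 ?_
  refine (Asymptotics.IsBigO.of_norm_le fun t => ?_).trans_isLittleO ((htwice hu).add (htwice hv))
  have hmid := convexOn_map_add_le hr (t • u) (t • v)
  rw [← smul_add, smul_comm 2 t u, smul_comm 2 t v] at hmid
  rw [Real.norm_of_nonneg (hnonneg _)]
  linarith [hnonneg (t • (u + v))]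

/-- The directions along which a nonnegative convex function `r` with `r 0 = 0` is flat to first
order at the origin. For `r` the remainder of a convex function with respect to a subgradient, these
are the directions in which the function is differentiable. -/
def flatDirections (r : E → ℝ) (hr : ConvexOn ℝ Set.univ r) (h0 : r 0 = 0)
    (hnonneg : ∀ h, 0 ≤ r h) : Submodule ℝ E where
  carrier := {h | HasDirDeriv r 0 h 0}
  zero_mem' := (hasDirDeriv_zero_iff_isLittleO h0).2 <| by
    simpa only [smul_zero, h0] using Asymptotics.isLittleO_zero _ _
  add_mem' := .add_of_convexOn hr h0 hnonneg
  smul_mem' c _ hu := by simpa only [Set.mem_ofPred_eq, mul_zero] using hu.smul c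

theorem isClosed_flatDirections [TopologicalSpace E] [IsTopologicalAddGroup E]
    [ContinuousConstSMul ℝ E] (hr : ConvexOn ℝ Set.univ r) (h0 : r 0 = 0) (hnonneg : ∀ h, 0 ≤ r h)
    (hcont : ContinuousAt r 0) : IsClosed (flatDirections r hr h0 hnonneg : Set E) := by
  refine isClosed_of_closure_subset fun h hh => (hasDirDeriv_zero_iff_isLittleO h0).2 ?_
  refine Asymptotics.isLittleO_iff.2 fun ε hε => ?_
  have hsmall : ∀ᶠ w in 𝓝 (0 : E), max (r w) (r (-w)) < ε := by
    have hneg : Tendsto (fun w => r (-w)) (𝓝 0) (𝓝 (r 0)) :=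
      hcont.tendsto.comp (by simpa only [neg_zero] using (continuous_neg (G := E)).tendsto 0)
    refine (hcont.tendsto.max hneg).eventually_lt_const ?_
    simpa only [h0, max_self] using hε
  have htranslate : Tendsto (fun h' => (2 : ℝ) • (h - h')) (𝓝 h) (𝓝 0) := by
    have : Continuous fun h' => (2 : ℝ) • (h - h') := by fun_prop
    simpa only [sub_self, smul_zero] using this.tendsto h
  obtain ⟨h', hclose, hflat⟩ := mem_closure_iff_nhds.1 hh _ (htranslate.eventually hsmall)
  have hflat' := (hasDirDeriv_zero_iff_isLittleO h0).1
    ((flatDirections r hr h0 hnonneg).smul_mem 2 hflat)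
  filter_upwards [Asymptotics.isLittleO_iff.1 hflat' hε, Metric.closedBall_mem_nhds (0 : ℝ) one_pos]
    with t hbound ht
  rw [mem_closedBall_zero_iff, Real.norm_eq_abs] at ht
  rw [Real.norm_of_nonneg (hnonneg _), Real.norm_eq_abs] at hbound ⊢
  calc r (t • h) = r (t • h' + t • (h - h')) := by rw [← smul_add, add_sub_cancel]
    _ ≤ (r ((2 : ℝ) • t • h') + r ((2 : ℝ) • t • (h - h'))) / 2 := convexOn_map_add_le hr _ _
    _ = (r (t • (2 : ℝ) • h') + r (t • (2 : ℝ) • (h - h'))) / 2 := by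
      rw [smul_comm 2 t h', smul_comm 2 t (h - h')]
    _ ≤ (ε * |t| + |t| * ε) / 2 := by
      gcongr
      exact (convexOn_map_smul_le_abs_mul_max hr h0 ht _).trans (by gcongr; exact hclose.le)
    _ = ε * |t| := by ring

end FlatDirections

section Subgradient

variable {E : Type*} [AddCommGroup E] [Module ℝ E] [TopologicalSpace E] {g : E → ℝ} {x : E}
  {F : E →L[ℝ] ℝ}

/-- `F` is a (continuous) subgradient of `g` at `x`: the affine function `g x + F (· - x)`
minorises `g`. -/
def IsSubgradientAt (g : E → ℝ) (x : E) (F : E →L[ℝ] ℝ) : Prop :=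
  ∀ h, g x + F h ≤ g (x + h)

/-- The error at `x + h` of the affine approximation of `g` at `x` with linear part `F`, as a
function of the increment `h`. -/
def affineRemainder (g : E → ℝ) (x : E) (F : E →L[ℝ] ℝ) (h : E) : ℝ :=
  g (x + h) - g x - F h

theorem exists_isSubgradientAt [IsTopologicalAddGroup E] [ContinuousSMul ℝ E]
    (hg : ConvexOn ℝ Set.univ g) (hcont : Continuous g) (x : E) :
    ∃ F : E →L[ℝ] ℝ, IsSubgradientAt g x F := by
  have hopen : IsOpen {p : E × ℝ | p.1 ∈ Set.univ ∧ g p.1 < p.2} := by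
    simp only [Set.mem_univ, true_and]
    exact isOpen_lt (hcont.comp continuous_fst) continuous_snd
  obtain ⟨Φ, hΦ⟩ := geometric_hahn_banach_point_open (x := (x, g x)) hg.convex_strict_epigraph hopen
    fun hmem => lt_irrefl _ hmem.2
  set φ : E →L[ℝ] ℝ := Φ.comp (.inl ℝ E ℝ)
  set c : ℝ := Φ (0, 1)
  have hsplit : ∀ y s, Φ (y, s) = φ y + s * c := fun y s => by
    rw [← smul_eq_mul, ← map_smul, ContinuousLinearMap.comp_apply, ContinuousLinearMap.inl_apply,
      ← map_add, Prod.smul_mk, Prod.mk_add_mk, smul_zero, add_zero, smul_eq_mul, mul_one, zero_add]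
  have hsep : ∀ y s, g y < s → φ x + g x * c < φ y + s * c := fun y s hs => by
    simpa only [hsplit] using hΦ (y, s) ⟨Set.mem_univ y, hs⟩
  have hc : 0 < c := by linarith [hsep x (g x + 1) (lt_add_one _)]
  refine ⟨-(c⁻¹ • φ), fun h => le_of_forall_gt fun s hs => ?_⟩
  have hlt : g x * c - φ h < s * c := by linarith [hsep (x + h) s hs, map_add φ x h]
  calc g x + -(c⁻¹ • φ) h = (g x * c - φ h) / c := by
        simp only [smul_apply, smul_eq_mul]
        field_simp
        ring
    _ < s := (div_lt_iff₀ hc).2 hlt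

@[simp]
theorem affineRemainder_zero : affineRemainder g x F 0 = 0 := by
  simp [affineRemainder]

theorem IsSubgradientAt.affineRemainder_nonneg (hF : IsSubgradientAt g x F) (h : E) :
    0 ≤ affineRemainder g x F h := by
  rw [affineRemainder]
  linarith [hF h]

theorem convexOn_affineRemainder (hg : ConvexOn ℝ Set.univ g) :
    ConvexOn ℝ Set.univ (affineRemainder g x F) :=
  ((hg.translate_right x).sub (concaveOn_const (g x) convex_univ)).sub
    ((F : E →ₗ[ℝ] ℝ).concaveOn convex_univ)

theorem hasDirDeriv_affineRemainder_iff {h : E} {L : ℝ} :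
    HasDirDeriv (affineRemainder g x F) 0 h (L - F h) ↔ HasDirDeriv g x h L := by
  have hquot : (fun t : ℝ => (affineRemainder g x F (0 + t • h) - affineRemainder g x F 0) / t)
      =ᶠ[𝓝[≠] 0] fun t => (g (x + t • h) - g x) / t - F h := by
    filter_upwards [self_mem_nhdsWithin] with t ht
    rw [affineRemainder_zero, sub_zero, zero_add, affineRemainder, map_smul, smul_eq_mul, sub_div,
      mul_div_cancel_left₀ _ ht]
  rw [HasDirDeriv, tendsto_congr' hquot, HasDirDeriv, tendsto_sub_const_iff]

theorem gateauxDiffAt_of_dense_span [IsTopologicalAddGroup E] [ContinuousSMul ℝ E]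
    (hg : ConvexOn ℝ Set.univ g) (hcont : Continuous g) {D : Set E}
    (hD : Dense (Submodule.span ℝ D : Set E)) (hdiff : ∀ h ∈ D, ∃ L, HasDirDeriv g x h L) :
    GateauxDiffAt g x := by
  obtain ⟨F, hF⟩ := exists_isSubgradientAt hg hcont x
  have hrem : Continuous (affineRemainder g x F) := by
    unfold affineRemainder
    fun_prop
  let W := flatDirections (affineRemainder g x F) (convexOn_affineRemainder hg)
    affineRemainder_zero hF.affineRemainder_nonneg
  have hspan : Submodule.span ℝ D ≤ W := Submodule.span_le.2 fun h hh => by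
    obtain ⟨L, hL⟩ := hdiff h hh
    have hflat := hasDirDeriv_affineRemainder_iff (F := F).2 hL
    rwa [hflat.eq_zero_of_nonneg affineRemainder_zero hF.affineRemainder_nonneg] at hflat
  have hclosed : IsClosed (W : Set E) := isClosed_flatDirections _ _ _ hrem.continuousAt
  refine ⟨F, fun h => hasDirDeriv_affineRemainder_iff (F := F).1 ?_⟩
  rw [sub_self]
  exact closure_minimal hspan hclosed (hD h)

end Subgradient

section PointwiseLimit

theorem exists_nonempty_interior_forall_le {X ι : Type*} [TopologicalSpace X] [BaireSpace X]
    [Nonempty X] {F : ι → X → ℝ} (hF : ∀ i, LowerSemicontinuous (F i))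
    (hbdd : ∀ x, BddAbove (Set.range (F · x))) :
    ∃ M : ℕ, (interior {x | ∀ i, F i x ≤ M}).Nonempty := by
  refine nonempty_interior_of_iUnion_of_closed (fun M => ?_) (Set.eq_univ_of_forall fun x => ?_)
  · rw [Set.ofPred_forall]
    exact isClosed_iInter fun i => (hF i).isClosed_preimage M
  · obtain ⟨B, hB⟩ := hbdd x
    obtain ⟨M, hM⟩ := exists_nat_ge B
    exact Set.mem_iUnion.2 ⟨M, fun i => (hB ⟨i, rfl⟩).trans hM⟩

theorem convexOn_of_tendsto {E ι : Type*} [AddCommGroup E] [Module ℝ E] {l : Filter ι} [l.NeBot]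
    {s : Set E} {F : ι → E → ℝ} {f : E → ℝ} (hs : Convex ℝ s) (hF : ∀ᶠ i in l, ConvexOn ℝ s (F i))
    (hf : ∀ x ∈ s, Tendsto (F · x) l (𝓝 (f x))) : ConvexOn ℝ s f := by
  refine ⟨hs, fun x hx y hy p q hp hq hpq => ?_⟩
  refine le_of_tendsto_of_tendsto (hf _ (hs hx hy hp hq hpq))
    (((hf x hx).const_smul p).add ((hf y hy).const_smul q)) ?_
  filter_upwards [hF] with i hi using hi.2 hx hy hp hq hpq

theorem continuous_of_tendsto_of_convexOn {E : Type*} [NormedAddCommGroup E] [NormedSpace ℝ E]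
    [BaireSpace E] {F : ℕ → E → ℝ} {f : E → ℝ} (hconv : ∀ n, ConvexOn ℝ Set.univ (F n))
    (hF : ∀ n, LowerSemicontinuous (F n)) (hf : ∀ x, Tendsto (F · x) atTop (𝓝 (f x))) :
    Continuous f := by
  have hfconv : ConvexOn ℝ Set.univ f :=
    convexOn_of_tendsto convex_univ (.of_forall hconv) fun x _ => hf x
  obtain ⟨M, x₀, hx₀⟩ := exists_nonempty_interior_forall_le hF fun x => (hf x).bddAbove_range
  have hbdd : (𝓝 x₀).IsBoundedUnder (· ≤ ·) f := by
    refine ⟨M, eventually_map.2 ?_⟩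
    filter_upwards [mem_interior_iff_mem_nhds.1 hx₀] with y hy
    exact le_of_tendsto' (hf y) hy
  have hiff : (∃ x ∈ Set.univ, (𝓝 x).IsBoundedUnder (· ≤ ·) f) ↔ ContinuousOn f Set.univ :=
    (hfconv.continuousOn_tfae isOpen_univ Set.univ_nonempty).out 3 1
  exact continuousOn_univ.1 (hiff.1 ⟨x₀, Set.mem_univ x₀, hbdd⟩)

theorem convexOn_sum {E ι : Type*} [AddCommGroup E] [Module ℝ E] {s : Set E} {t : Finset ι}
    {F : ι → E → ℝ} (hs : Convex ℝ s) (hF : ∀ i ∈ t, ConvexOn ℝ s (F i)) :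
    ConvexOn ℝ s fun x => ∑ i ∈ t, F i x := by
  rw [← Finset.sum_fn]
  exact Finset.sum_induction F (ConvexOn ℝ s) (fun _ _ => .add) (convexOn_const 0 hs) hF

end PointwiseLimit

theorem dense_span_range_of_forall_exists_tendsto {E : Type*} [AddCommGroup E] [Module ℝ E]
    [TopologicalSpace E] {e : ℕ → E}
    (he : ∀ x : E, ∃ a : ℕ → ℝ,
      Tendsto (fun k : ℕ => ∑ n ∈ Finset.range k, a n • e n) atTop (𝓝 x)) :
    Dense (Submodule.span ℝ (Set.range e) : Set E) := by
  intro x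
  obtain ⟨a, ha⟩ := he x
  exact mem_closure_of_tendsto ha <| .of_forall fun k => Submodule.sum_mem _ fun n _ =>
    Submodule.smul_mem _ _ (Submodule.subset_span (Set.mem_range_self n))

theorem statement7_general {E ι : Type*} [NormedAddCommGroup E] [NormedSpace ℝ E] [BaireSpace E]
    {e : ι → E} (he : Dense (Submodule.span ℝ (Set.range e) : Set E)) {xs : E} {fk : ℕ → E → ℝ}
    (hconv : ∀ k, ConvexOn ℝ Set.univ (fk k)) (hcont : ∀ k, Continuous (fk k))
    {a : ι → ℝ} (ha : ∀ n, 0 < a n) {d : ℕ → ι → E → ℝ}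
    (hd : ∀ n k, ∀ x ∈ lineInterval xs (e n) (a n), HasDirDeriv (fk k) x (e n) (d k n x))
    {f : E → ℝ} (hf : ∀ x, Tendsto (fun K : ℕ => ∑ k ∈ Finset.range K, fk k x) atTop (𝓝 (f x)))
    {S : ι → E → ℝ}
    (hS : ∀ n, TendstoUniformlyOn (fun (K : ℕ) x => ∑ k ∈ Finset.range K, d k n x) (S n) atTop
      (lineInterval xs (e n) (a n))) :
    (∀ k, GateauxDiffAt (fk k) xs) ∧ GateauxDiffAt f xs ∧
      ∀ n, HasDirDeriv f xs (e n) (S n xs) := by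
  have hconvSum : ∀ K : ℕ, ConvexOn ℝ Set.univ fun x => ∑ k ∈ Finset.range K, fk k x :=
    fun K => convexOn_sum convex_univ fun k _ => hconv k
  have hfconv : ConvexOn ℝ Set.univ f :=
    convexOn_of_tendsto convex_univ (.of_forall hconvSum) fun x _ => hf x
  have hfcont : Continuous f := continuous_of_tendsto_of_convexOn hconvSum
    (fun K => (continuous_finsetSum _ fun k _ => hcont k).lowerSemicontinuous) hf
  have hfderiv : ∀ n, HasDirDeriv f xs (e n) (S n xs) := fun n =>
    hasDirDeriv_of_tendstoUniformlyOn (ha n)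
      (fun _ y hy => hasDirDeriv_sum fun k _ => hd n k y hy) (hS n) fun y _ => hf y
  refine ⟨fun k => gateauxDiffAt_of_dense_span (hconv k) (hcont k) he ?_,
    gateauxDiffAt_of_dense_span hfconv hfcont he ?_, hfderiv⟩
  · exact Set.forall_mem_range.2 fun n => ⟨_, hd n k xs (self_mem_lineInterval (ha n))⟩
  · exact Set.forall_mem_range.2 fun n => ⟨_, hfderiv n⟩

/-- **Proposition 4.** Let `E` be a real Banach space with a Schauder basis `(e_n)` and
biorthogonal system `(e_n), (e*_n)`, and `x* ∈ E`.  Let `f_k : E → ℝ` be convex continuous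
functions such that (i) for every `n` there is `a_n > 0` such that every `f_k` has a
directional derivative `f_k'(x; e_n)` at every `x ∈ I_{x*,a_n} = {x* + t e_n : |t| < a_n}`,
(ii) `∑_k f_k` converges pointwise to `f`, and (iii) for every `n` the series
`∑_k f_k'(·; e_n)` converges uniformly on `I_{x*,a_n}`.  Then every `f_k` is
Gâteaux-differentiable at `x*`, `f` is Gâteaux-differentiable at `x*`, and
`f'(x*; e_n) = ∑_k f_k'(x*; e_n)` for all `n`. -/
theorem statement7 {E : Type*} [NormedAddCommGroup E] [NormedSpace ℝ E] [CompleteSpace E]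
    (e : ℕ → E) (estar : ℕ → E →L[ℝ] ℝ)
    (hbo1 : ∀ n, estar n (e n) = 1)
    (hbo2 : ∀ n m, n ≠ m → estar n (e m) = 0)
    (hbasis : ∀ x : E, ∃! a : ℕ → ℝ,
      Tendsto (fun k : ℕ => ∑ n ∈ Finset.range k, a n • e n) atTop (𝓝 x))
    (hrepr : ∀ x : E,
      Tendsto (fun k : ℕ => ∑ n ∈ Finset.range k, estar n x • e n) atTop (𝓝 x))
    (xs : E)
    (fk : ℕ → E → ℝ)
    (hconv : ∀ k, ConvexOn ℝ Set.univ (fk k)) (hcont : ∀ k, Continuous (fk k))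
    (a : ℕ → ℝ) (ha : ∀ n, 0 < a n)
    -- (i): each `f_k` has directional derivative `d k n x` in direction `e_n` on `I_{x*,a_n}`
    (d : ℕ → ℕ → E → ℝ)
    (hi : ∀ n k : ℕ, ∀ x ∈ {y : E | ∃ t : ℝ, |t| < a n ∧ y = xs + t • e n},
      HasDirDeriv (fk k) x (e n) (d k n x))
    -- (ii): `∑_k f_k` converges pointwise to `f`
    (f : E → ℝ)
    (hf : ∀ x : E, Tendsto (fun K : ℕ => ∑ k ∈ Finset.range K, fk k x) atTop (𝓝 (f x)))
    -- (iii): for every `n`, `∑_k f_k'(·; e_n)` converges uniformly on `I_{x*,a_n}`, to `S n`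
    (S : ℕ → E → ℝ)
    (hiii : ∀ n : ℕ, TendstoUniformlyOn (fun K x => ∑ k ∈ Finset.range K, d k n x) (S n)
      atTop {y : E | ∃ t : ℝ, |t| < a n ∧ y = xs + t • e n}) :
    (∀ k, GateauxDiffAt (fk k) xs) ∧ GateauxDiffAt f xs ∧
      ∀ n : ℕ, HasDirDeriv f xs (e n) (S n xs) := by
  exact statement7_general
    (dense_span_range_of_forall_exists_tendsto fun x => (hbasis x).exists) hconv hcont ha hi hf hiii
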